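/- Fix α, θ ∈ ℝ. The spectrum of the homogeneous Y–Y twisted walk is symmetric in momentum, i.e. Tr(U_YY(−k)) = Tr(U_YY(k)) holds for all k ∈ ℝ, if and only if sin(θ)·sin(4α) = 0 (that is, θ = nπ or α = nπ/4 for some integer n). -/

import Mathlib

open Matrix Filter Topology

noncomputable def σx : Matrix (Fin 2) (Fin 2) ℂ := !![0, 1; 1, 0]
noncomputable def σy : Matrix (Fin 2) (Fin 2) ℂ := !![0, -Complex.I; Complex.I, 0]
noncomputable def σz : Matrix (Fin 2) (Fin 2) ℂ := !![1, 0; 0, -1]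

/-- Rotation about the x-axis by angle `t`. -/
noncomputable def Rx (t : ℝ) : Matrix (Fin 2) (Fin 2) ℂ :=
  !![(Real.cos (t/2) : ℂ), -Complex.I * Real.sin (t/2);
     -Complex.I * Real.sin (t/2), (Real.cos (t/2) : ℂ)]

/-- Rotation about the y-axis by angle `t`. -/
noncomputable def Ry (t : ℝ) : Matrix (Fin 2) (Fin 2) ℂ :=
  !![(Real.cos (t/2) : ℂ), -(Real.sin (t/2) : ℂ);
     (Real.sin (t/2) : ℂ), (Real.cos (t/2) : ℂ)]

/-- Rotation about the z-axis by angle `t`. -/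
noncomputable def Rz (t : ℝ) : Matrix (Fin 2) (Fin 2) ℂ :=
  !![Complex.exp (-(Complex.I * t) / 2), 0; 0, Complex.exp ((Complex.I * t) / 2)]

/-- Fourier-space shift operator at momentum `κ`. -/
noncomputable def Sh (κ : ℝ) : Matrix (Fin 2) (Fin 2) ℂ :=
  !![Complex.exp (Complex.I * κ), 0; 0, Complex.exp (-(Complex.I * κ))]

/-- The coin operator `Cα`. -/
noncomputable def Calpha (α : ℝ) : Matrix (Fin 2) (Fin 2) ℂ :=
  !![(Real.sin α : ℂ), -Complex.I * Real.cos α;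
     Complex.I * Real.cos α, -(Real.sin α : ℂ)]

/-- The coin operator `Cβ`. -/
noncomputable def Cbeta (α : ℝ) : Matrix (Fin 2) (Fin 2) ℂ :=
  !![-(Real.cos α : ℂ), -Complex.I * Real.sin α;
     -Complex.I * Real.sin α, -(Real.cos α : ℂ)]

/-- The massless homogeneous Y–Y twisted quantum walk unitary at momentum `k`,
coin angle `α` and twist angle `θ`: `U_YY = (W_β · W_α)²` with
`W_α = S(k)·Cα` and `W_β = R_y(−θ)·S(k)·R_y(θ)·Cβ`. -/
noncomputable def UYY (k α θ : ℝ) : Matrix (Fin 2) (Fin 2) ℂ :=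
  (Ry (-θ) * Sh k * Ry θ * Cbeta α * (Sh k * Calpha α)) *
    (Ry (-θ) * Sh k * Ry θ * Cbeta α * (Sh k * Calpha α))

theorem Matrix.trace_mul_self_fin_two {R : Type*} [CommRing R] (M : Matrix (Fin 2) (Fin 2) R) :
    (M * M).trace = M.trace ^ 2 - 2 * M.det := by
  simp only [trace_fin_two, det_fin_two, mul_apply, Fin.sum_univ_two]
  ring

theorem Sh_eq_cos_sin (k : ℝ) :
    Sh k = !![(Real.cos k + Real.sin k * Complex.I : ℂ), 0;
      0, (Real.cos k - Real.sin k * Complex.I : ℂ)] := by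
  have hneg : -(Complex.I * k) = (-k : ℂ) * Complex.I := by ring
  rw [Sh, hneg, mul_comm, Complex.exp_mul_I, Complex.exp_mul_I]
  simp [sub_eq_add_neg]

theorem det_Ry (t : ℝ) : (Ry t).det = 1 := by
  have h : (Real.cos (t / 2) : ℂ) ^ 2 + (Real.sin (t / 2) : ℂ) ^ 2 = 1 := by
    exact_mod_cast Real.cos_sq_add_sin_sq (t / 2)
  rw [Ry, det_fin_two_of]
  linear_combination h

theorem det_Sh (k : ℝ) : (Sh k).det = 1 := by
  rw [Sh, det_fin_two_of, ← Complex.exp_add]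
  simp

theorem det_Calpha (α : ℝ) : (Calpha α).det = -1 := by
  have h : (Real.cos α : ℂ) ^ 2 + (Real.sin α : ℂ) ^ 2 = 1 := by
    exact_mod_cast Real.cos_sq_add_sin_sq α
  rw [Calpha, det_fin_two_of]
  linear_combination -h + (Real.cos α : ℂ) ^ 2 * Complex.I_sq

theorem det_Cbeta (α : ℝ) : (Cbeta α).det = 1 := by
  have h : (Real.cos α : ℂ) ^ 2 + (Real.sin α : ℂ) ^ 2 = 1 := by
    exact_mod_cast Real.cos_sq_add_sin_sq α
  rw [Cbeta, det_fin_two_of]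
  linear_combination h - (Real.sin α : ℂ) ^ 2 * Complex.I_sq

/-- The trace of a single period `W_β · W_α` of the walk. -/
theorem trace_walk_period (k α θ : ℝ) :
    (Ry (-θ) * Sh k * Ry θ * Cbeta α * (Sh k * Calpha α)).trace =
      2 * Complex.I * ((Real.cos (2 * α) * Real.sin θ * Real.sin k ^ 2
        - Real.sin (2 * α) * Real.sin k * Real.cos k : ℝ) : ℂ) := by
  have hθ : Real.sin θ = 2 * Real.sin (θ / 2) * Real.cos (θ / 2) := by
    rw [← Real.sin_two_mul]
    ring_nf
  have h : (Real.cos (θ / 2) : ℂ) ^ 2 + (Real.sin (θ / 2) : ℂ) ^ 2 = 1 := by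
    exact_mod_cast Real.cos_sq_add_sin_sq (θ / 2)
  rw [hθ, Real.sin_two_mul, Real.cos_two_mul', Sh_eq_cos_sin, Ry, Ry, Calpha, Cbeta, neg_div,
    Real.cos_neg, Real.sin_neg]
  simp only [trace_fin_two, mul_apply, Fin.sum_univ_two, of_apply, cons_val', cons_val_zero,
    cons_val_one, cons_val_fin_one]
  simp only [Complex.ofReal_mul, Complex.ofReal_sub, Complex.ofReal_pow, Complex.ofReal_neg,
    Complex.ofReal_ofNat]
  generalize (Real.cos (θ / 2) : ℂ) = a at *
  generalize (Real.sin (θ / 2) : ℂ) = b at *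
  generalize (Real.cos α : ℂ) = c
  generalize (Real.sin α : ℂ) = s
  generalize (Real.cos k : ℂ) = x
  generalize (Real.sin k : ℂ) = y
  have hI := Complex.I_sq
  generalize Complex.I = i at *
  grind

theorem trace_UYY (k α θ : ℝ) :
    (UYY k α θ).trace =
      ((2 - 4 * (Real.cos (2 * α) * Real.sin θ * Real.sin k ^ 2
        - Real.sin (2 * α) * Real.sin k * Real.cos k) ^ 2 : ℝ) : ℂ) := by
  rw [UYY, trace_mul_self_fin_two, trace_walk_period]
  simp only [det_mul, det_Ry, det_Sh, det_Calpha, det_Cbeta, mul_pow, Complex.I_sq]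
  push_cast
  ring

/-- The spectrum of the homogeneous Y–Y twisted walk is symmetric in momentum
(`Tr U_YY(−k) = Tr U_YY(k)` for all `k`) iff `sin θ · sin 4α = 0`. -/
theorem trace_UYY_symm_iff (α θ : ℝ) :
    (∀ k : ℝ, (UYY (-k) α θ).trace = (UYY k α θ).trace) ↔
      Real.sin θ * Real.sin (4*α) = 0 := by
  have h4 : Real.sin (4 * α) = 2 * Real.sin (2 * α) * Real.cos (2 * α) := by
    rw [← Real.sin_two_mul]
    ring_nf
  simp only [trace_UYY, Complex.ofReal_inj, Real.sin_neg, Real.cos_neg]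
  constructor
  · intro h
    have hk := h (Real.pi / 4)
    have h2 : (√2 : ℝ) ^ 2 = 2 := Real.sq_sqrt zero_le_two
    rw [Real.sin_pi_div_four, Real.cos_pi_div_four] at hk
    rw [h4]
    linear_combination (-1 / 2) * hk -
      Real.sin θ * Real.sin (2 * α) * Real.cos (2 * α) * (√2 ^ 2 + 2) / 2 * h2
  · intro h k
    linear_combination (-8 * Real.sin k ^ 3 * Real.cos k) * (h - Real.sin θ * h4)
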